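/- Let Q be a well-formed formula and let N be a Q-complete, Q-consistent extension of the implicational propositional calculus. Define v_N : wf → {0,1} by v_N(A) = 1 when QQA ∈ T(N) and v_N(A) = 0 when QA ∈ T(N) (this is well defined by Q-completeness and Q-consistency). Then v_N is a valuation: for all wfs A, B, v_N(A ⊃ B) = 0 if and only if v_N(A) = 1 and v_N(B) = 0. -/

import Mathlib

/-- Well-formed formulas of the implicational propositional calculus:
propositional variables (indexed by ℕ, so the set of wfs is countable)
and the single connective ⊃. -/
inductive Wf where
  | var : ℕ → Wf
  | imp : Wf → Wf → Wf
deriving DecidableEq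

infixr:60 " ⊃' " => Wf.imp

/-- `Deduces Γ A` : `A` is deducible from the set `Γ` of extra axioms/hypotheses,
using the three axiom schemes of IPC (including the Peirce scheme) and modus ponens.
Theorems of IPC are `Deduces ∅ A`; for an extension `M` of IPC with extra-axiom
set `E`, `T(M)` is `Deduces E`, and deducibility from hypotheses `Γ` in `M` is
`Deduces (E ∪ Γ)`. -/
inductive Deduces : Set Wf → Wf → Prop where
  | hyp : ∀ {Γ : Set Wf} {A : Wf}, A ∈ Γ → Deduces Γ A
  | ax1 : ∀ {Γ : Set Wf} (A B : Wf), Deduces Γ (A ⊃' (B ⊃' A))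
  | ax2 : ∀ {Γ : Set Wf} (A B C : Wf),
      Deduces Γ ((A ⊃' (B ⊃' C)) ⊃' ((A ⊃' B) ⊃' (A ⊃' C)))
  | peirce : ∀ {Γ : Set Wf} (A B : Wf), Deduces Γ (((A ⊃' B) ⊃' A) ⊃' A)
  | mp : ∀ {Γ : Set Wf} {A B : Wf}, Deduces Γ (A ⊃' B) → Deduces Γ A → Deduces Γ B

theorem Deduces.imp_self {Γ : Set Wf} (A : Wf) : Deduces Γ (A ⊃' A) :=
  .mp (.mp (.ax2 A (A ⊃' A) A) (.ax1 A (A ⊃' A))) (.ax1 A A)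

/-- Deduction theorem. -/
theorem Deduces.ded {Γ : Set Wf} {A B : Wf} (h : Deduces (insert A Γ) B) :
    Deduces Γ (A ⊃' B) := by
  induction h with
  | hyp hC =>
    rcases hC with rfl | hC
    · exact Deduces.imp_self _
    · exact .mp (.ax1 _ _) (.hyp hC)
  | ax1 X Y => exact .mp (.ax1 _ _) (.ax1 X Y)
  | ax2 X Y Z => exact .mp (.ax1 _ _) (.ax2 X Y Z)
  | peirce X Y => exact .mp (.ax1 _ _) (.peirce X Y)
  | mp _ _ ih1 ih2 => exact .mp (.mp (.ax2 _ _ _) (ih1)) (ih2)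

theorem Deduces.weaken {Γ : Set Wf} {A B : Wf} (h : Deduces Γ B) :
    Deduces (insert A Γ) B := by
  induction h with
  | hyp hC => exact .hyp (Or.inr hC)
  | ax1 X Y => exact .ax1 X Y
  | ax2 X Y Z => exact .ax2 X Y Z
  | peirce X Y => exact .peirce X Y
  | mp _ _ ih1 ih2 => exact .mp ih1 ih2

theorem Deduces.top {Γ : Set Wf} {A : Wf} : Deduces (insert A Γ) A := .hyp (Or.inl rfl)

/-- Let N (extra axioms E) be a Q-complete, Q-consistent extension of IPC and
let v = v_N be defined by v(A) = 1 when QQA ∈ T(N) and v(A) = 0 when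
QA ∈ T(N).  Then v is a valuation: v(A ⊃ B) = 0 iff v(A) = 1 and v(B) = 0. -/
theorem stmt_13 (Q : Wf) (E : Set Wf)
    (hcomplete : ∀ A : Wf, Deduces E ((A ⊃' Q) ⊃' Q) ∨ Deduces E (A ⊃' Q))
    (hcons : ¬ Deduces E Q)
    (v : Wf → ℕ)
    (hv1 : ∀ A : Wf, Deduces E ((A ⊃' Q) ⊃' Q) → v A = 1)
    (hv0 : ∀ A : Wf, Deduces E (A ⊃' Q) → v A = 0) :
    ∀ A B : Wf, v (A ⊃' B) = 0 ↔ (v A = 1 ∧ v B = 0) := by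
  intro A B
  rcases hcomplete B with hB | hB
  · have h : Deduces E (((A ⊃' B) ⊃' Q) ⊃' Q) := by
      apply Deduces.ded
      refine .mp hB.weaken (Deduces.ded ?_)
      exact .mp Deduces.top.weaken (.mp (.ax1 _ _) Deduces.top)
    simp [hv1 _ h, hv1 _ hB]
  · rcases hcomplete A with hA | hA
    · have h : Deduces E ((A ⊃' B) ⊃' Q) := by
        apply Deduces.ded
        refine .mp hA.weaken (Deduces.ded ?_)
        exact .mp hB.weaken.weaken (.mp Deduces.top.weaken Deduces.top)
      simp [hv0 _ h, hv1 _ hA, hv0 _ hB]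
    · have h : Deduces E (((A ⊃' B) ⊃' Q) ⊃' Q) := by
        apply Deduces.ded
        refine .mp (.peirce Q B) (Deduces.ded ?_)
        refine .mp Deduces.top.weaken (Deduces.ded ?_)
        exact .mp Deduces.top.weaken (.mp hA.weaken.weaken.weaken Deduces.top)
      simp [hv1 _ h, hv0 _ hA]
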